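/- There exists a natural number M such that for every m ≥ M and every finite field F of even order q, writing G = Sp_{2m}(F), the number of elements y ∈ G such that no x ∈ G makes {x, y} invariably generate G is at least |G|/(4·q³); equivalently, the number of y ∈ G for which some x ∈ G makes {x, y} invariably generate G is at most (1 − 1/(4·q³)) · |G|. -/

import Mathlib

/-- `{x, y}` invariably generates `G`: for all `g, h`, the conjugates
`g * x * g⁻¹` and `h * y * h⁻¹` generate `G`. -/
def InvGen {G : Type*} [Group G] (x y : G) : Prop :=
  ∀ g h : G, Subgroup.closure {g * x * g⁻¹, h * y * h⁻¹} = ⊤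

/-!
Let `G` be the isometry group of a nondegenerate alternating form `B` over a field `F` of order `q`,
a power of two, in dimension greater than two. Call `y : G` bad if no `x` generates `G` invariably
with it.

Quadratic forms with polar form `B` come in two types, and `G` is transitive on each type but fixes
no form. Every `x : G` fixes such a form; so if `y` fixes forms of both types, then `x` and `y`
have conjugates in a common proper stabilizer, and `y` is bad.

The refinements of `B` are a torsor under `V`. Let `K y` be the number of vectors fixed by `y`,
which is also the number of forms fixed by `y`, and `P y` the number of fixed pairs `(Q, z)` with
`Q` and `z +ᵥ Q` of opposite types. Then `2 * P y ≤ K y ^ 2`, and Burnside's lemma gives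
`∑ K ≥ 2 * |G|`, `∑ K ^ 2 ≤ (2 * q + 2) * |G|` and `∑ P ≥ q * |G|`. Since `K y` is a power of `q`,
`(K y - 1) * (K y - q) ≥ 0`; hence
`3 * P y ≤ 2 * (K y - 1) * (K y - q) + 2 * (q ^ 2 + q + 1) * [y is bad]`, because `P y = 0` unless
`y` is bad. Summing over `y` yields `q * |G| ≤ 2 * (q ^ 2 + q + 1) * #bad`.
-/

/-! ### The Artin–Schreier character -/

section ArtinSchreier

/-- The Artin–Schreier map `s ↦ s ^ 2 + s` of a ring of characteristic two. -/
def artinSchreier (R : Type*) [CommRing R] [CharP R 2] : R →+ R where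
  toFun s := s ^ 2 + s
  map_zero' := by simp
  map_add' a b := by rw [CharTwo.add_sq]; ring

@[simp]
lemma artinSchreier_apply {R : Type*} [CommRing R] [CharP R 2] (s : R) :
    artinSchreier R s = s ^ 2 + s := rfl

variable {F : Type*} [Field F] [CharP F 2]

lemma coe_ker_artinSchreier : ((artinSchreier F).ker : Set F) = {0, 1} := by
  ext s
  have hfactor : s ^ 2 + s = s * (s + 1) := by ring
  simp [AddMonoidHom.mem_ker, hfactor, CharTwo.add_eq_zero]

lemma index_range_artinSchreier [Finite F] : (artinSchreier F).range.index = 2 := by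
  have hker : Nat.card (artinSchreier F).ker = 2 := by
    rw [← SetLike.coe_sort_coe, coe_ker_artinSchreier, Nat.card_coe_set_eq,
      Set.ncard_pair zero_ne_one]
  have hlagrange := (artinSchreier F).range.card_mul_index
  rw [← (artinSchreier F).ker.card_mul_index, AddSubgroup.index_ker, hker, mul_comm] at hlagrange
  exact Nat.eq_of_mul_eq_mul_right Nat.card_pos hlagrange

open Classical in
variable (F) in
/-- The nontrivial additive character of a finite field of characteristic two whose kernel is the
range of the Artin–Schreier map. -/
noncomputable def artinSchreierChar [Finite F] : AddChar F ℤ where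
  toFun x := if x ∈ (artinSchreier F).range then 1 else -1
  map_zero_eq_one' := if_pos (zero_mem _)
  map_add_eq_mul' x y := by
    rw [AddSubgroup.add_mem_iff_of_index_two index_range_artinSchreier]
    by_cases hx : x ∈ (artinSchreier F).range <;> by_cases hy : y ∈ (artinSchreier F).range <;>
      simp [hx, hy]

variable [Finite F]

lemma artinSchreierChar_eq_one_or (x : F) :
    artinSchreierChar F x = 1 ∨ artinSchreierChar F x = -1 := by
  classical exact ite_eq_or_eq (x ∈ (artinSchreier F).range) 1 (-1)

lemma artinSchreierChar_eq_one_iff {x : F} :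
    artinSchreierChar F x = 1 ↔ ∃ s, s ^ 2 + s = x := by
  classical
  change (if x ∈ (artinSchreier F).range then (1 : ℤ) else -1) = 1 ↔ _
  simp

lemma artinSchreierChar_sq (x : F) : artinSchreierChar F (x ^ 2) = artinSchreierChar F x := by
  have h : artinSchreierChar F (x ^ 2) * artinSchreierChar F x = 1 := by
    rw [← AddChar.map_add_eq_mul, artinSchreierChar_eq_one_iff]
    exact ⟨x, rfl⟩
  exact Int.eq_of_mul_eq_one h

lemma artinSchreierChar_ne_one : artinSchreierChar F ≠ 1 := by
  intro h
  have htop : (artinSchreier F).range = ⊤ := by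
    refine (AddSubgroup.eq_top_iff' _).2 fun x ↦ ?_
    exact artinSchreierChar_eq_one_iff.1 (by simp [h])
  simpa [htop] using index_range_artinSchreier (F := F)

lemma two_mul_card_artinSchreierChar_eq_neg_one :
    2 * Nat.card {x : F // artinSchreierChar F x = -1} = Nat.card F := by
  obtain ⟨a, ha⟩ := AddChar.ne_one_iff.1 (artinSchreierChar_ne_one (F := F))
  replace ha := (artinSchreierChar_eq_one_or a).resolve_left ha
  have hshift : {x : F // artinSchreierChar F x = -1} ≃ {x : F // ¬artinSchreierChar F x = -1} :=
    (Equiv.addRight a).subtypeEquiv fun x ↦ by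
      rcases artinSchreierChar_eq_one_or x with hx | hx <;>
        simp [AddChar.map_add_eq_mul, ha, hx]
  classical
  rw [← Nat.card_congr (Equiv.sumCompl fun x : F ↦ artinSchreierChar F x = -1), Nat.card_sum,
    ← Nat.card_congr hshift, two_mul]

end ArtinSchreier

/-! ### Counting fixed points -/

section Counting

lemma sum_addChar_linearMap_eq_zero {F V R : Type*} [Field F] [AddCommGroup V] [Module F V]
    [Fintype V] [CommRing R] [IsDomain R] {ψ : AddChar F R} (hψ : ψ ≠ 1) {f : V →ₗ[F] F}
    (hf : f ≠ 0) : ∑ v, ψ (f v) = 0 := by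
  obtain ⟨a, ha⟩ := AddChar.ne_one_iff.1 hψ
  obtain ⟨v, rfl⟩ := LinearMap.surjective hf a
  exact AddChar.sum_eq_zero_of_ne_one (ψ := ψ.compAddMonoidHom f.toAddMonoidHom)
    (AddChar.ne_one_iff.2 ⟨v, ha⟩)

lemma two_mul_card_pairs_not_iff_le {α : Type*} [Finite α] (p : α → Prop) :
    2 * Nat.card {x : α × α // ¬(p x.1 ↔ p x.2)} ≤ Nat.card α ^ 2 := by
  classical
  have hpairs : {x : α × α | ¬(p x.1 ↔ p x.2)} =
      {a | p a} ×ˢ {a | ¬p a} ∪ {a | ¬p a} ×ˢ {a | p a} := by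
    ext x
    simp only [Set.mem_ofPred_eq, Set.mem_union, Set.mem_prod]
    tauto
  have hdisj : Disjoint ({a | p a} ×ˢ {a | ¬p a}) ({a | ¬p a} ×ˢ {a | p a}) :=
    Set.disjoint_left.2 fun x hx hx' ↦ hx'.1 hx.1
  have hcompl : Set.ncard {a | p a} + Set.ncard {a | ¬p a} = Nat.card α :=
    Set.ncard_add_ncard_compl {a | p a}
  have hcard : Nat.card {x : α × α // ¬(p x.1 ↔ p x.2)} =
      2 * (Set.ncard {a | p a} * Set.ncard {a | ¬p a}) := by
    rw [← Set.coe_ofPred, Nat.card_coe_set_eq, hpairs, Set.ncard_union_eq hdisj, Set.ncard_prod,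
      Set.ncard_prod]
    ring
  rw [hcard, ← hcompl]
  linarith [four_mul_le_sq_add (Set.ncard {a | p a}) (Set.ncard {a | ¬p a})]

variable (G : Type*) [Group G]

lemma sum_natCard_fixedBy_eq [Fintype G] (X : Type*) [MulAction G X] [Finite X] :
    ∑ g : G, Nat.card (MulAction.fixedBy X g) =
      Nat.card (MulAction.orbitRel.Quotient G X) * Nat.card G := by
  rw [← Nat.card_sigma, Nat.card_congr (MulAction.sigmaFixedByEquivOrbitsProdGroup G X),
    Nat.card_prod]

lemma two_le_card_orbits (V : Type*) [AddMonoid V] [DistribMulAction G V] [Finite V]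
    [Nontrivial V] : 2 ≤ Nat.card (MulAction.orbitRel.Quotient G V) := by
  obtain ⟨v, hv⟩ := exists_ne (0 : V)
  suffices Nontrivial (MulAction.orbitRel.Quotient G V) from Finite.one_lt_card
  refine ⟨Quotient.mk _ v, Quotient.mk _ 0, fun h ↦ hv ?_⟩
  obtain ⟨g, hg⟩ := Quotient.exact h
  exact hg.symm.trans (smul_zero g)

lemma card_orbits_le {X ι : Type*} [MulAction G X] [Finite ι] (r : ι → X)
    (hr : ∀ x, ∃ i, x ∈ MulAction.orbit G (r i)) :
    Nat.card (MulAction.orbitRel.Quotient G X) ≤ Nat.card ι := by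
  refine Nat.card_le_card_of_surjective (fun i ↦ Quotient.mk _ (r i)) fun x ↦ ?_
  induction x using Quotient.inductionOn with | _ x
  obtain ⟨i, hi⟩ := hr x
  exact ⟨i, (Quotient.sound hi).symm⟩

lemma le_card_orbits {X ι : Type*} [MulAction G X] [Finite X] (f : X → ι)
    (hf : ∀ (g : G) x, f (g • x) = f x) (hsurj : Function.Surjective f) :
    Nat.card ι ≤ Nat.card (MulAction.orbitRel.Quotient G X) := by
  refine Nat.card_le_card_of_surjective (Quotient.lift f ?_)
    (Quotient.lift_surjective _ _ hsurj)
  rintro _ x ⟨g, rfl⟩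
  exact hf g x

variable {G}

lemma natCard_fixedBy_prod {X Y : Type*} [MulAction G X] [MulAction G Y] (g : G) :
    Nat.card (MulAction.fixedBy (X × Y) g) =
      Nat.card (MulAction.fixedBy X g) * Nat.card (MulAction.fixedBy Y g) := by
  rw [show MulAction.fixedBy (X × Y) g = MulAction.fixedBy X g ×ˢ MulAction.fixedBy Y g from
    Set.ext fun _ ↦ Prod.ext_iff, Nat.card_coe_set_eq, Set.ncard_prod]
  rfl

lemma exists_natCard_fixedBy_eq_pow (F : Type*) {V : Type*} [Field F] [AddCommGroup V] [Module F V]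
    [Module.Finite F V] [DistribMulAction G V] [SMulCommClass G F V] (g : G) :
    ∃ n, Nat.card (MulAction.fixedBy V g) = Nat.card F ^ n :=
  ⟨_, Module.natCard_eq_pow_finrank
    (V := (DistribSMul.toLinearMap F V g).eqLocus LinearMap.id)⟩

end Counting

/-! ### Invariable generation -/

section InvGen

variable {G : Type*} [Group G]

lemma not_invGen_of_mem {H : Subgroup G} (hH : H ≠ ⊤) {x y : G} (g : G) (hx : g * x * g⁻¹ ∈ H)
    (hy : y ∈ H) : ¬InvGen x y := by
  intro hgen
  refine hH (top_unique ((hgen g 1).ge.trans ?_))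
  rw [Subgroup.closure_le, Set.insert_subset_iff, Set.singleton_subset_iff]
  exact ⟨hx, by simpa using hy⟩

lemma InvGen.map {H : Type*} [Group H] (e : G ≃* H) {x y : G} (h : InvGen x y) :
    InvGen (e x) (e y) := by
  intro a b
  have hmap := congrArg (Subgroup.map (e : G →* H)) (h (e.symm a) (e.symm b))
  rw [MonoidHom.map_closure, Subgroup.map_top_of_surjective _ e.surjective] at hmap
  simpa [Set.image_pair] using hmap

lemma invGen_map_iff {H : Type*} [Group H] (e : G ≃* H) {x y : G} :
    InvGen (e x) (e y) ↔ InvGen x y :=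
  ⟨fun h ↦ by simpa using h.map e.symm, InvGen.map e⟩

lemma card_forall_not_invGen_congr {H : Type*} [Group H] (e : G ≃* H) :
    Nat.card {y : G // ∀ x, ¬InvGen x y} = Nat.card {y : H // ∀ x, ¬InvGen x y} :=
  Nat.card_congr <| e.toEquiv.subtypeEquiv fun y ↦ by
    rw [← e.forall_congr_right]
    simp [invGen_map_iff]

lemma card_forall_not_invGen_add_card_exists_invGen [Finite G] :
    Nat.card {y : G // ∀ x, ¬InvGen x y} + Nat.card {y : G // ∃ x, InvGen x y} = Nat.card G := by
  classical
  rw [← Nat.card_congr (Equiv.sumCompl fun y : G ↦ ∀ x, ¬InvGen x y), Nat.card_sum]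
  simp only [not_forall, not_not]

end InvGen

/-! ### Isometry groups of alternating forms -/

section IsometryGroup

/-- The group of linear automorphisms of a module preserving a bilinear form; for a nondegenerate
alternating form it is the symplectic group. -/
def isometryGroup {R V : Type*} [CommSemiring R] [AddCommMonoid V] [Module R V]
    (B : LinearMap.BilinForm R V) : Subgroup (V ≃ₗ[R] V) where
  carrier := {g | ∀ u w, B (g u) (g w) = B u w}
  one_mem' _ _ := rfl
  mul_mem' hg hh u w := (hg _ _).trans (hh u w)
  inv_mem' {g} hg u w := by
    rw [← hg, LinearEquiv.coe_inv, g.apply_symm_apply, g.apply_symm_apply]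

section CommSemiring

variable {R V : Type*} [CommSemiring R] [AddCommMonoid V] [Module R V]
  {B : LinearMap.BilinForm R V}

lemma form_smul_smul (g : isometryGroup B) (u w : V) : B (g • u) (g • w) = B u w :=
  g.2 u w

lemma form_inv_smul_right (g : isometryGroup B) (u w : V) : B u (g⁻¹ • w) = B (g • u) w := by
  rw [← form_smul_smul g, smul_inv_smul]

instance [Finite V] : Finite (isometryGroup B) :=
  have : Finite (V ≃ₗ[R] V) := DFunLike.finite _
  inferInstance

end CommSemiring

section Transvection

variable {R V : Type*} [CommRing R] [AddCommGroup V] [Module R V] {B : LinearMap.BilinForm R V}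

/-- The symplectic transvection `u ↦ u + s * B a u • a` of an alternating form `B`. -/
def symplecticTransvection (hA : B.IsAlt) (s : R) (a : V) : isometryGroup B :=
  ⟨LinearEquiv.transvection (f := B a) (v := s • a) (by simp [hA.self_eq_zero]), fun u w ↦ by
    simp only [LinearEquiv.transvection.apply, map_add, map_smul, LinearMap.add_apply,
      LinearMap.smul_apply, smul_eq_mul, hA.self_eq_zero, ← hA.neg_eq a u]
    ring⟩

lemma symplecticTransvection_smul (hA : B.IsAlt) (s : R) (a u : V) :
    symplecticTransvection hA s a • u = u + (s * B a u) • a := by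
  rw [mul_comm, mul_smul]
  rfl

end Transvection

section Witt

variable {F V : Type*} [Field F] [AddCommGroup V] [Module F V] {B : LinearMap.BilinForm F V}

lemma exists_smul_eq_of_form_ne_zero (hA : B.IsAlt) {u v v' : V} (hu : B u v = B u v')
    (hv : B v v' ≠ 0) : ∃ g : isometryGroup B, g • u = u ∧ g • v = v' := by
  have hu0 : B (v' - v) u = 0 := by rw [← hA.neg_eq, map_sub, hu, sub_self, neg_zero]
  have hv0 : B (v' - v) v = -B v v' := by
    rw [map_sub, LinearMap.sub_apply, hA.self_eq_zero, sub_zero, hA.neg_eq]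
  refine ⟨symplecticTransvection hA (-B v v')⁻¹ (v' - v), ?_, ?_⟩
  · rw [symplecticTransvection_smul, hu0, mul_zero, zero_smul, add_zero]
  · rw [symplecticTransvection_smul, hv0, inv_mul_cancel₀ (neg_ne_zero.2 hv), one_smul,
      add_sub_cancel]

variable [FiniteDimensional F V]

lemma exists_form_separating (hB : B.Nondegenerate) {u v : V} (hv : v ∉ Submodule.span F {u}) :
    ∃ w, B w u = 0 ∧ B w v ≠ 0 := by
  obtain ⟨f, hfv, hfu⟩ := Submodule.exists_le_ker_of_notMem hv
  refine ⟨(B.toDual hB).symm f, ?_, ?_⟩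
  · rw [LinearMap.BilinForm.apply_toDual_symm_apply]
    exact hfu (Submodule.mem_span_singleton_self u)
  · rwa [LinearMap.BilinForm.apply_toDual_symm_apply]

lemma exists_form_separating_pair (hB : B.Nondegenerate) {u v v' : V}
    (hv : v ∉ Submodule.span F {u}) (hv' : v' ∉ Submodule.span F {u}) :
    ∃ w, B w u = 0 ∧ B w v ≠ 0 ∧ B w v' ≠ 0 := by
  obtain ⟨w, hwu, hwv⟩ := exists_form_separating hB hv
  obtain ⟨w', hwu', hwv'⟩ := exists_form_separating hB hv'
  by_cases h : B w v' = 0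
  · by_cases h' : B w' v = 0
    · refine ⟨w + w', ?_, ?_, ?_⟩ <;> simp [hwu, hwu', h, h', hwv, hwv']
    · exact ⟨w', hwu', h', hwv'⟩
  · exact ⟨w, hwu, hwv, h⟩

/-- A case of Witt's extension theorem. If `B v v' = 0`, no single transvection moves `v` to `v'`;
two of them do, by way of `v + w` with `w` orthogonal to `u` but to neither `v` nor `v'`. -/
lemma exists_smul_eq_of_notMem_span (hA : B.IsAlt) (hB : B.Nondegenerate) {u v v' : V}
    (hu : B u v = B u v') (hv : v ∉ Submodule.span F {u}) (hv' : v' ∉ Submodule.span F {u}) :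
    ∃ g : isometryGroup B, g • u = u ∧ g • v = v' := by
  by_cases h : B v v' = 0
  · obtain ⟨w, hwu, hwv, hwv'⟩ := exists_form_separating_pair hB hv hv'
    have huw : B u w = 0 := by rw [← hA.neg_eq, hwu, neg_zero]
    obtain ⟨g, hgu, hgv⟩ := exists_smul_eq_of_form_ne_zero hA (u := u) (v := v) (v' := v + w)
      (by rw [map_add, huw, add_zero])
      (by rwa [map_add, hA.self_eq_zero, zero_add, ← hA.neg_eq, neg_ne_zero])
    obtain ⟨g', hgu', hgv'⟩ := exists_smul_eq_of_form_ne_zero hA (u := u) (v := v + w) (v' := v')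
      (by rw [map_add, huw, add_zero, hu]) (by rwa [map_add, LinearMap.add_apply, h, zero_add])
    exact ⟨g' * g, by rw [mul_smul, hgu, hgu'], by rw [mul_smul, hgv, hgv']⟩
  · exact exists_smul_eq_of_form_ne_zero hA hu h

lemma exists_smul_eq_of_ne_zero (hA : B.IsAlt) (hB : B.Nondegenerate) {v v' : V} (hv : v ≠ 0)
    (hv' : v' ≠ 0) : ∃ g : isometryGroup B, g • v = v' := by
  obtain ⟨g, -, hg⟩ := exists_smul_eq_of_notMem_span hA hB (u := 0) (v := v) (v' := v')
    (by simp) (by simpa using hv) (by simpa using hv')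
  exact ⟨g, hg⟩

lemma exists_notMem_span_form_eq (hB : B.Nondegenerate) (hV : 2 < Module.finrank F V) {e : V}
    (he : e ≠ 0) (c : F) : ∃ w ∉ Submodule.span F {e}, B e w = c := by
  have hBe : B e ≠ 0 := (map_ne_zero_iff (B.toDual hB) (B.toDual hB).injective).2 he
  obtain ⟨w, hw⟩ := LinearMap.surjective hBe c
  obtain ⟨k, hk, hke⟩ : ∃ k ∈ (B e).ker, k ∉ Submodule.span F {e} := by
    refine SetLike.not_le_iff_exists.1 fun hle ↦ ?_
    have hker := Submodule.finrank_mono hle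
    have hrank := (B e).finrank_range_add_finrank_ker
    have hrange := Submodule.finrank_le (B e).range
    rw [finrank_span_singleton he] at hker
    rw [Module.finrank_self] at hrange
    lia
  by_cases hwe : w ∈ Submodule.span F {e}
  · refine ⟨w + k, fun h ↦ hke ?_, by rw [map_add, hw, LinearMap.mem_ker.1 hk, add_zero]⟩
    exact (Submodule.add_mem_iff_right _ hwe).1 h
  · exact ⟨w, hwe, hw⟩

/-- The orbits of pairs are represented by `(0, 0)`, `(0, e)`, `(e, c • e)` and `(e, w)` with
`w` outside the line of `e`, one for each value of `B e w`. -/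
lemma card_orbits_prod_le [Finite F] (hA : B.IsAlt) (hB : B.Nondegenerate)
    (hV : 2 < Module.finrank F V) :
    Nat.card (MulAction.orbitRel.Quotient (isometryGroup B) (V × V)) ≤ 2 * Nat.card F + 2 := by
  have : Nontrivial V := Module.nontrivial_of_finrank_pos (by lia : 0 < Module.finrank F V)
  obtain ⟨e, he⟩ := exists_ne (0 : V)
  choose w hwe hw using exists_notMem_span_form_eq hB hV he
  let rep : Bool ⊕ F ⊕ F → V × V :=
    Sum.elim (fun b ↦ (0, cond b e 0)) (Sum.elim (fun c ↦ (e, c • e)) fun c ↦ (e, w c))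
  have hcard : Nat.card (Bool ⊕ F ⊕ F) = 2 * Nat.card F + 2 := by
    rw [Nat.card_sum, Nat.card_sum, Nat.card_eq_fintype_card (α := Bool), Fintype.card_bool]
    ring
  rw [← hcard]
  refine card_orbits_le _ rep fun (u, v) ↦ ?_
  by_cases hu : u = 0
  · subst hu
    by_cases hv : v = 0
    · exact ⟨.inl false, 1, by simp [rep, hv]⟩
    · obtain ⟨g, hg⟩ := exists_smul_eq_of_ne_zero hA hB he hv
      exact ⟨.inl true, g, Prod.ext (smul_zero g) hg⟩
  · obtain ⟨g, hg⟩ := exists_smul_eq_of_ne_zero hA hB he hu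
    by_cases hv : g⁻¹ • v ∈ Submodule.span F {e}
    · obtain ⟨c, hc⟩ := Submodule.mem_span_singleton.1 hv
      exact ⟨.inr (.inl c), g, Prod.ext hg (by simp [rep, hc])⟩
    · obtain ⟨h, hhe, hhw⟩ := exists_smul_eq_of_notMem_span hA hB (hw (B e (g⁻¹ • v)))
        (hwe _) hv
      exact ⟨.inr (.inr (B e (g⁻¹ • v))), g * h, by simp [rep, mul_smul, hhe, hhw, hg]⟩

end Witt

end IsometryGroup

/-! ### Quadratic refinements of an alternating form -/

/-- A quadratic form whose polar form is the bilinear form `B`. In characteristic two it is not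
determined by `B`, and its stabilizer in the isometry group of `B` is an orthogonal group. -/
structure QuadraticRefinement {R V : Type*} [CommRing R] [AddCommGroup V] [Module R V]
    (B : LinearMap.BilinForm R V) where
  /-- The underlying quadratic form. -/
  toQuadraticForm : QuadraticForm R V
  polarBilin_eq : toQuadraticForm.polarBilin = B

namespace QuadraticRefinement

section CommRing

variable {R V : Type*} [CommRing R] [AddCommGroup V] [Module R V] {B : LinearMap.BilinForm R V}

instance : FunLike (QuadraticRefinement B) V R where
  coe Q := Q.toQuadraticForm
  coe_injective := by
    rintro ⟨Q, _⟩ ⟨Q', _⟩ h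
    congr
    exact DFunLike.coe_injective h

@[ext]
lemma ext {Q Q' : QuadraticRefinement B} (h : ∀ u, Q u = Q' u) : Q = Q' :=
  DFunLike.ext _ _ h

instance [Finite R] [Finite V] : Finite (QuadraticRefinement B) :=
  DFunLike.finite _

protected lemma map_zero (Q : QuadraticRefinement B) : Q 0 = 0 :=
  Q.toQuadraticForm.map_zero

protected lemma map_smul (Q : QuadraticRefinement B) (c : R) (u : V) : Q (c • u) = c ^ 2 * Q u := by
  rw [sq]
  exact Q.toQuadraticForm.map_smul c u

protected lemma map_add (Q : QuadraticRefinement B) (u w : V) : Q (u + w) = Q u + Q w + B u w := by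
  rw [← congrArg (fun B' ↦ B' u w) Q.polarBilin_eq]
  exact QuadraticMap.map_add Q.toQuadraticForm u w

lemma form_comm (Q : QuadraticRefinement B) (u w : V) : B u w = B w u := by
  have h := Q.map_add w u
  rw [add_comm w u, Q.map_add] at h
  linear_combination h

instance : MulAction (isometryGroup B) (QuadraticRefinement B) where
  smul g Q :=
    { toQuadraticForm := Q.toQuadraticForm.comp (g⁻¹ : isometryGroup B).1.toLinearMap
      polarBilin_eq := by
        rw [QuadraticMap.polarBilin_comp, Q.polarBilin_eq]
        exact LinearMap.ext₂ (form_smul_smul g⁻¹) }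
  one_smul Q := rfl
  mul_smul g h Q := rfl

lemma smul_apply (g : isometryGroup B) (Q : QuadraticRefinement B) (u : V) :
    (g • Q) u = Q (g⁻¹ • u) := rfl

variable [CharP R 2]

instance : AddAction V (QuadraticRefinement B) where
  vadd z Q :=
    { toQuadraticForm := Q.toQuadraticForm + QuadraticMap.linMulLin (B z) (B z)
      polarBilin_eq := by
        refine LinearMap.ext₂ fun u w ↦ ?_
        rw [← congrArg (fun B' ↦ B' u w) Q.polarBilin_eq]
        simp only [QuadraticMap.polarBilin_apply_apply, QuadraticMap.polar,
          add_apply, QuadraticMap.linMulLin_apply, map_add]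
        linear_combination CharTwo.add_self_eq_zero (B z u * B z w) }
  zero_vadd Q := by
    ext u
    change Q u + B 0 u * B 0 u = Q u
    simp
  add_vadd z z' Q := by
    ext u
    change Q u + B (z + z') u * B (z + z') u = Q u + B z' u * B z' u + B z u * B z u
    rw [map_add, LinearMap.add_apply]
    linear_combination CharTwo.add_self_eq_zero (B z u * B z' u)

lemma vadd_apply (z : V) (Q : QuadraticRefinement B) (u : V) :
    (z +ᵥ Q) u = Q u + B z u ^ 2 :=
  congrArg (Q u + ·) (sq (B z u)).symm

lemma smul_vadd (g : isometryGroup B) (z : V) (Q : QuadraticRefinement B) :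
    g • (z +ᵥ Q) = g • z +ᵥ g • Q := by
  ext u
  rw [smul_apply, vadd_apply, vadd_apply, smul_apply, form_inv_smul_right]

lemma isAlt (Q : QuadraticRefinement B) : B.IsAlt := fun u ↦ by
  have h := Q.map_add u u
  rwa [← two_smul R u, CharTwo.two_eq_zero, zero_smul, Q.map_zero, CharTwo.add_self_eq_zero,
    zero_add, eq_comm] at h

lemma map_symplecticTransvection_smul (Q : QuadraticRefinement B) (s : R) (a u : V) :
    Q (symplecticTransvection Q.isAlt s a • u) = Q u + (s + s ^ 2 * Q a) * B a u ^ 2 := by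
  rw [symplecticTransvection_smul, Q.map_add, Q.map_smul, map_smul, Q.form_comm u a,
    smul_eq_mul]
  ring

/-- The refinement is the diagonal of the strictly upper triangular half of `B` in an ordered
basis. -/
lemma nonempty_of_isAlt [Module.Free R V] (hA : B.IsAlt) : Nonempty (QuadraticRefinement B) := by
  let b := Module.Free.chooseBasis R V
  obtain ⟨_, _⟩ := exists_wellFoundedLT (Module.Free.ChooseBasisIndex R V)
  let T : LinearMap.BilinForm R V :=
    b.constr R fun i ↦ b.constr R fun j ↦ if i < j then B (b i) (b j) else 0
  have hT i j : T (b i) (b j) = if i < j then B (b i) (b j) else 0 := by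
    simp only [T, Module.Basis.constr_basis]
  refine ⟨⟨T.toQuadraticMap, ?_⟩⟩
  rw [LinearMap.BilinMap.polarBilin_toQuadraticMap]
  refine b.ext fun i ↦ b.ext fun j ↦ ?_
  rw [LinearMap.add_apply, LinearMap.add_apply, LinearMap.flip_apply, hT, hT]
  rcases lt_trichotomy i j with hij | rfl | hij
  · rw [if_pos hij, if_neg hij.not_gt, add_zero]
  · rw [if_neg (lt_irrefl i), add_zero, hA.self_eq_zero]
  · rw [if_neg hij.not_gt, if_pos hij, zero_add, ← hA.neg_eq, CharTwo.neg_eq]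

end CommRing

section Field

variable {F V : Type*} [Field F] [CharP F 2] [AddCommGroup V] [Module F V]
  {B : LinearMap.BilinForm F V}

lemma vadd_left_injective (hB : B.Nondegenerate) (Q : QuadraticRefinement B) :
    Function.Injective fun z : V ↦ z +ᵥ Q := by
  refine fun z z' h ↦ LinearMap.ker_eq_bot.1 hB.ker_eq_bot (LinearMap.ext fun u ↦ ?_)
  have hu : (z +ᵥ Q) u = (z' +ᵥ Q) u := congrArg (· u) h
  rw [vadd_apply, vadd_apply, add_right_inj] at hu
  exact CharTwo.sq_injective hu

/-- The difference of two refinements of the same form is additive and Frobenius-semilinear, so its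
square root is a linear functional. -/
lemma exists_vadd_eq [PerfectRing F 2] [FiniteDimensional F V] (hB : B.Nondegenerate)
    (Q Q' : QuadraticRefinement B) : ∃ z : V, z +ᵥ Q = Q' := by
  let root := (frobeniusEquiv F 2).symm
  have root_sq x : root x ^ 2 = x := frobeniusEquiv_symm_pow_p F 2 x
  let f : V →ₗ[F] F :=
    { toFun u := root (Q' u - Q u)
      map_add' u w := by
        rw [← map_add, Q.map_add, Q'.map_add]
        congr 1
        ring
      map_smul' c u := CharTwo.sq_injective <| by
        simp only [RingHom.id_apply, smul_eq_mul, mul_pow, root_sq, Q.map_smul, Q'.map_smul]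
        ring }
  refine ⟨(B.toDual hB).symm f, ext fun u ↦ ?_⟩
  rw [vadd_apply, LinearMap.BilinForm.apply_toDual_symm_apply]
  exact (congrArg (Q u + ·) (root_sq _)).trans (add_sub_cancel _ _)

lemma exists_apply_eq [PerfectRing F 2] [Nontrivial V] (hB : B.Nondegenerate)
    (Q : QuadraticRefinement B) (t : F) : ∃ z, Q z = t := by
  obtain ⟨z, hz⟩ : ∃ z, Q z ≠ 0 := by
    by_contra! h
    refine hB.ne_zero (LinearMap.ext₂ fun u w ↦ ?_)
    simpa [h] using (Q.map_add u w).symm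
  obtain ⟨c, hc⟩ := surjective_frobenius F 2 (t / Q z)
  rw [frobenius_def] at hc
  exact ⟨c • z, by rw [Q.map_smul, hc, div_mul_cancel₀ _ hz]⟩

/-- Were `Q` invariant, it would be constant on nonzero vectors, with value `c` say. But then
`c = Q (e + w) = c + c + B e w` for `w` outside the line of `e`, whereas `B e w` is arbitrary. -/
lemma stabilizer_ne_top [FiniteDimensional F V] (hB : B.Nondegenerate)
    (hV : 2 < Module.finrank F V) (Q : QuadraticRefinement B) :
    MulAction.stabilizer (isometryGroup B) Q ≠ ⊤ := by
  intro htop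
  have : Nontrivial V := Module.nontrivial_of_finrank_pos (by lia : 0 < Module.finrank F V)
  obtain ⟨e, he⟩ := exists_ne (0 : V)
  have hconst {v : V} (hv : v ≠ 0) : Q v = Q e := by
    obtain ⟨g, rfl⟩ := exists_smul_eq_of_ne_zero Q.isAlt hB he hv
    have hg : g • Q = Q := by
      rw [← MulAction.mem_stabilizer_iff, htop]
      exact Subgroup.mem_top g
    conv_lhs => rw [← hg, smul_apply, inv_smul_smul]
  have hvalue (t : F) : Q e = t := by
    obtain ⟨w, hwe, rfl⟩ := exists_notMem_span_form_eq hB hV he t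
    have hw : w ≠ 0 := by
      rintro rfl
      exact hwe (zero_mem _)
    have hew : e + w ≠ 0 := by
      intro h
      rw [eq_neg_of_add_eq_zero_right h] at hwe
      exact hwe (neg_mem (Submodule.mem_span_singleton_self e))
    have h := Q.map_add e w
    rwa [hconst hw, hconst hew, CharTwo.add_self_eq_zero, zero_add] at h
  exact zero_ne_one ((hvalue 0).symm.trans (hvalue 1))

end Field

end QuadraticRefinement

/-- The range of `g - 1` is the orthogonal complement of the vectors fixed by `g`. -/
lemma exists_smul_sub_eq {F V : Type*} [Field F] [AddCommGroup V] [Module F V]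
    [FiniteDimensional F V] {B : LinearMap.BilinForm F V} (hB : B.Nondegenerate)
    (g : isometryGroup B) {v : V} (hv : ∀ u, g • u = u → B u v = 0) : ∃ w, g • w - w = v := by
  by_contra hrange
  obtain ⟨f, hfv, hf⟩ := Submodule.exists_le_ker_of_notMem
    (p := (DistribSMul.toLinearMap F V g - LinearMap.id).range) hrange
  obtain ⟨u, rfl⟩ := (B.toDual hB).surjective f
  have hu (w : V) : B u (g • w) = B u w := by
    rw [← sub_eq_zero, ← map_sub]
    exact hf ⟨w, rfl⟩
  have hfix : g • u = u := by
    refine LinearMap.ker_eq_bot.1 hB.ker_eq_bot (LinearMap.ext fun w ↦ ?_)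
    rw [← form_inv_smul_right, ← hu, smul_inv_smul]
  exact hfv (hv u hfix)

namespace QuadraticRefinement

variable {F V : Type*} [Field F] [CharP F 2] [Finite F] [AddCommGroup V] [Module F V]
  {B : LinearMap.BilinForm F V}

lemma exists_smul_eq_self [FiniteDimensional F V] (hA : B.IsAlt) (hB : B.Nondegenerate)
    (g : isometryGroup B) : ∃ Q : QuadraticRefinement B, g • Q = Q := by
  obtain ⟨Q⟩ := nonempty_of_isAlt hA
  obtain ⟨c, hc⟩ := exists_vadd_eq hB Q (g • Q)
  have horth (u : V) (hu : g • u = u) : B u (-c) = 0 := by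
    have h : (c +ᵥ Q) u = Q u := by rw [hc, smul_apply, inv_smul_eq_iff.2 hu.symm]
    rw [vadd_apply, add_eq_left, sq_eq_zero_iff] at h
    rw [map_neg, Q.form_comm, h, neg_zero]
  obtain ⟨w, hw⟩ := exists_smul_sub_eq hB g horth
  refine ⟨w +ᵥ Q, ?_⟩
  rw [smul_vadd, ← hc, vadd_vadd, sub_eq_iff_eq_add.1 hw, neg_add_cancel_comm]

lemma exists_smul_eq_vadd (Q : QuadraticRefinement B) {z : V}
    (hz : artinSchreierChar F (Q z) = 1) : ∃ g : isometryGroup B, g • Q = z +ᵥ Q := by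
  obtain ⟨s, hs⟩ : ∃ s, s + s ^ 2 * Q z = 1 := by
    by_cases h0 : Q z = 0
    · exact ⟨1, by simp [h0]⟩
    · obtain ⟨t, ht⟩ := artinSchreierChar_eq_one_iff.1 hz
      refine ⟨t / Q z, ?_⟩
      field_simp
      rw [← ht]
      ring
  refine ⟨(symplecticTransvection Q.isAlt s z)⁻¹, ext fun u ↦ ?_⟩
  rw [smul_apply, inv_inv, map_symplecticTransvection_smul, hs, one_mul, vadd_apply]

lemma artinSchreierChar_vadd_apply (Q : QuadraticRefinement B) (z u : V) :
    artinSchreierChar F ((z +ᵥ Q) u) =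
      artinSchreierChar F (Q u) * artinSchreierChar F (B z u) := by
  rw [vadd_apply, AddChar.map_add_eq_mul, artinSchreierChar_sq]

section GaussSum

variable [Fintype V]

/-- The Gauss sum of a quadratic form over a finite field of characteristic two. Its sign is the
Arf invariant of the form. -/
noncomputable def gaussSum (Q : QuadraticRefinement B) : ℤ :=
  ∑ u, artinSchreierChar F (Q u)

lemma gaussSum_smul (g : isometryGroup B) (Q : QuadraticRefinement B) :
    (g • Q).gaussSum = Q.gaussSum :=
  Equiv.sum_comp (MulAction.toPerm g⁻¹) fun u ↦ artinSchreierChar F (Q u)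

lemma gaussSum_vadd (z : V) (Q : QuadraticRefinement B) :
    (z +ᵥ Q).gaussSum = artinSchreierChar F (Q z) * Q.gaussSum := by
  have hterm (u : V) : artinSchreierChar F ((z +ᵥ Q) u) =
      artinSchreierChar F (Q z) * artinSchreierChar F (Q (z + u)) := by
    rw [artinSchreierChar_vadd_apply, Q.map_add, AddChar.map_add_eq_mul, AddChar.map_add_eq_mul]
    rcases artinSchreierChar_eq_one_or (Q z) with h | h <;> simp [h]
  rw [gaussSum, Finset.sum_congr rfl fun u _ ↦ hterm u, ← Finset.mul_sum]
  exact congrArg _ (Equiv.sum_comp (Equiv.addLeft z) fun u ↦ artinSchreierChar F (Q u))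

lemma gaussSum_sq (hB : B.Nondegenerate) (Q : QuadraticRefinement B) :
    Q.gaussSum ^ 2 = Fintype.card V := by
  have hcolumn (u : V) (hu : u ≠ 0) : ∑ z : V, artinSchreierChar F ((z +ᵥ Q) u) = 0 := by
    have hBu : B u ≠ 0 := fun h ↦
      hu (LinearMap.ker_eq_bot.1 hB.ker_eq_bot (h.trans (map_zero B).symm))
    simp_rw [artinSchreierChar_vadd_apply, Q.form_comm _ u]
    rw [← Finset.mul_sum, sum_addChar_linearMap_eq_zero artinSchreierChar_ne_one hBu, mul_zero]
  calc Q.gaussSum ^ 2 = ∑ z : V, (z +ᵥ Q).gaussSum := by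
        simp_rw [gaussSum_vadd, ← Finset.sum_mul, sq, gaussSum]
    _ = ∑ u, ∑ z : V, artinSchreierChar F ((z +ᵥ Q) u) := Finset.sum_comm
    _ = ∑ z : V, artinSchreierChar F ((z +ᵥ Q) 0) :=
        Fintype.sum_eq_single 0 hcolumn
    _ = Fintype.card V := by simp [QuadraticRefinement.map_zero]

lemma gaussSum_ne_zero (hB : B.Nondegenerate) (Q : QuadraticRefinement B) : Q.gaussSum ≠ 0 := by
  intro h
  have hsq := gaussSum_sq hB Q
  rw [h, zero_pow two_ne_zero, eq_comm, Nat.cast_eq_zero] at hsq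
  exact Fintype.card_ne_zero hsq

/-- A refinement is of plus type if its Gauss sum is positive, that is, if its Arf invariant
vanishes. -/
def IsPlusType (Q : QuadraticRefinement B) : Prop :=
  0 < Q.gaussSum

lemma isPlusType_smul_iff (g : isometryGroup B) (Q : QuadraticRefinement B) :
    (g • Q).IsPlusType ↔ Q.IsPlusType := by
  rw [IsPlusType, gaussSum_smul, IsPlusType]

lemma isPlusType_vadd_iff (hB : B.Nondegenerate) (z : V) (Q : QuadraticRefinement B) :
    (z +ᵥ Q).IsPlusType ↔ (Q.IsPlusType ↔ artinSchreierChar F (Q z) = 1) := by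
  have hne := gaussSum_ne_zero hB Q
  rw [IsPlusType, gaussSum_vadd, IsPlusType]
  rcases artinSchreierChar_eq_one_or (Q z) with h | h <;> rw [h] <;> grind

lemma exists_smul_eq_of_isPlusType_iff (hB : B.Nondegenerate) {Q Q' : QuadraticRefinement B}
    (h : Q.IsPlusType ↔ Q'.IsPlusType) : ∃ g : isometryGroup B, g • Q = Q' := by
  have : FiniteDimensional F V := Module.Finite.of_finite
  obtain ⟨z, rfl⟩ := exists_vadd_eq hB Q Q'
  rw [isPlusType_vadd_iff hB] at h
  exact Q.exists_smul_eq_vadd (by tauto)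

end GaussSum

/-- The element `x` fixes some refinement `R`, which has the type of one of the two given
refinements fixed by `y`; hence some conjugate of `x` lies in the stabilizer of that refinement. -/
lemma not_invGen [Finite V] (hB : B.Nondegenerate) (hV : 2 < Module.finrank F V)
    {Q : QuadraticRefinement B} {z : V} (hQz : artinSchreierChar F (Q z) = -1)
    {y : isometryGroup B} (hQ : y • Q = Q) (hz : y • z = z) (x : isometryGroup B) :
    ¬InvGen x y := by
  have := Fintype.ofFinite V
  obtain ⟨R, hR⟩ := exists_smul_eq_self Q.isAlt hB x
  have of_fixed {Q' : QuadraticRefinement B} (hy : y • Q' = Q')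
      (htype : R.IsPlusType ↔ Q'.IsPlusType) : ¬InvGen x y := by
    obtain ⟨g, rfl⟩ := exists_smul_eq_of_isPlusType_iff hB htype
    refine not_invGen_of_mem (stabilizer_ne_top hB hV (g • R)) g ?_ hy
    rw [MulAction.mem_stabilizer_iff, mul_smul, mul_smul, inv_smul_smul, hR]
  by_cases htype : R.IsPlusType ↔ Q.IsPlusType
  · exact of_fixed hQ htype
  · refine of_fixed (Q' := z +ᵥ Q) (by rw [smul_vadd, hQ, hz]) ?_
    rw [isPlusType_vadd_iff hB, hQz]
    tauto

end QuadraticRefinement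

/-! ### Counting fixed pairs of refinements -/

section FixedPairs

variable {F V : Type*} [Field F] [CharP F 2] [Finite F] [AddCommGroup V] [Module F V]
  {B : LinearMap.BilinForm F V}

open QuadraticRefinement

variable (B) in
/-- The pairs `(Q, z)` such that `Q` and `z +ᵥ Q` are refinements of opposite types; see
`QuadraticRefinement.isPlusType_vadd_iff`. -/
def oppositeTypePairs : SubMulAction (isometryGroup B) (QuadraticRefinement B × V) where
  carrier := {p | artinSchreierChar F (p.1 p.2) = -1}
  smul_mem' g p hp := by
    change artinSchreierChar F ((g • p.1) (g • p.2)) = -1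
    rwa [QuadraticRefinement.smul_apply, inv_smul_smul]

lemma mem_oppositeTypePairs {p : QuadraticRefinement B × V} :
    p ∈ oppositeTypePairs B ↔ artinSchreierChar F (p.1 p.2) = -1 := Iff.rfl

lemma smul_eq_of_mem_fixedBy_oppositeTypePairs {y : isometryGroup B} {p : oppositeTypePairs B}
    (hp : p ∈ MulAction.fixedBy (oppositeTypePairs B) y) :
    y • p.1.1 = p.1.1 ∧ y • p.1.2 = p.1.2 :=
  Prod.ext_iff.1 (congrArg Subtype.val hp)

lemma exists_isPlusType_iff [Fintype V] [Nontrivial V] (hA : B.IsAlt) (hB : B.Nondegenerate)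
    (P : Prop) : ∃ Q : QuadraticRefinement B, Q.IsPlusType ↔ P := by
  obtain ⟨Q⟩ := nonempty_of_isAlt hA
  by_cases h : Q.IsPlusType ↔ P
  · exact ⟨Q, h⟩
  · obtain ⟨t, ht⟩ := AddChar.ne_one_iff.1 (artinSchreierChar_ne_one (F := F))
    obtain ⟨z, rfl⟩ := Q.exists_apply_eq hB t
    refine ⟨z +ᵥ Q, ?_⟩
    rw [isPlusType_vadd_iff hB]
    tauto

variable [Finite V]

/-- The type of `Q` and the value `Q z` are independent invariants of a pair `(Q, z)`. -/
lemma card_le_card_orbits_oppositeTypePairs [Nontrivial V] (hA : B.IsAlt)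
    (hB : B.Nondegenerate) : Nat.card F ≤
      Nat.card (MulAction.orbitRel.Quotient (isometryGroup B) (oppositeTypePairs B)) := by
  have := Fintype.ofFinite V
  let invariants (p : oppositeTypePairs B) : {t : F // artinSchreierChar F t = -1} × Prop :=
    (⟨p.1.1 p.1.2, p.2⟩, p.1.1.IsPlusType)
  have hinv (g : isometryGroup B) (p : oppositeTypePairs B) :
      invariants (g • p) = invariants p := by
    refine Prod.ext (Subtype.ext ?_) (propext (isPlusType_smul_iff g p.1.1))
    change (g • p.1.1) (g • p.1.2) = p.1.1 p.1.2
    rw [QuadraticRefinement.smul_apply, inv_smul_smul]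
  have hsurj : Function.Surjective invariants := by
    rintro ⟨⟨t, ht⟩, P⟩
    obtain ⟨Q, hQ⟩ := exists_isPlusType_iff hA hB P
    obtain ⟨z, rfl⟩ := Q.exists_apply_eq hB t
    exact ⟨⟨(Q, z), ht⟩, Prod.ext rfl (propext hQ)⟩
  have hcard : Nat.card ({t : F // artinSchreierChar F t = -1} × Prop) = Nat.card F := by
    rw [Nat.card_prod, Nat.card_eq_fintype_card (α := Prop), Fintype.card_prop, mul_comm,
      two_mul_card_artinSchreierChar_eq_neg_one]
  exact hcard.ge.trans (le_card_orbits _ invariants hinv hsurj)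

lemma natCard_fixedBy_quadraticRefinement (hA : B.IsAlt) (hB : B.Nondegenerate)
    (y : isometryGroup B) :
    Nat.card (MulAction.fixedBy (QuadraticRefinement B) y) =
      Nat.card (MulAction.fixedBy V y) := by
  obtain ⟨Q, hQ⟩ := exists_smul_eq_self hA hB y
  have smul_vadd_eq (z : V) : y • (z +ᵥ Q) = y • z +ᵥ Q := by rw [smul_vadd, hQ]
  refine (Nat.card_eq_of_bijective (fun z : MulAction.fixedBy V y ↦
    (⟨z.1 +ᵥ Q, (smul_vadd_eq z).trans (congrArg (· +ᵥ Q) z.2)⟩ :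
      MulAction.fixedBy (QuadraticRefinement B) y)) ⟨fun z z' h ↦ ?_, fun ⟨Q', hQ'⟩ ↦ ?_⟩).symm
  · exact Subtype.ext (vadd_left_injective hB Q (congrArg Subtype.val h))
  · obtain ⟨z, rfl⟩ := exists_vadd_eq hB Q Q'
    exact ⟨⟨z, vadd_left_injective hB Q ((smul_vadd_eq z).symm.trans hQ')⟩, rfl⟩

lemma two_mul_natCard_fixedBy_oppositeTypePairs_le (hA : B.IsAlt) (hB : B.Nondegenerate)
    (y : isometryGroup B) :
    2 * Nat.card (MulAction.fixedBy (oppositeTypePairs B) y) ≤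
      Nat.card (MulAction.fixedBy V y) ^ 2 := by
  have := Fintype.ofFinite V
  rw [← natCard_fixedBy_quadraticRefinement hA hB]
  refine le_trans ?_ (two_mul_card_pairs_not_iff_le
    fun Q : MulAction.fixedBy (QuadraticRefinement B) y ↦ Q.1.IsPlusType)
  have hfix (p : MulAction.fixedBy (oppositeTypePairs B) y) :
      y • p.1.1.1 = p.1.1.1 ∧ y • p.1.1.2 = p.1.1.2 :=
    smul_eq_of_mem_fixedBy_oppositeTypePairs p.2
  let first (p : MulAction.fixedBy (oppositeTypePairs B) y) :
      MulAction.fixedBy (QuadraticRefinement B) y :=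
    ⟨p.1.1.1, (hfix p).1⟩
  let second (p : MulAction.fixedBy (oppositeTypePairs B) y) :
      MulAction.fixedBy (QuadraticRefinement B) y :=
    ⟨p.1.1.2 +ᵥ p.1.1.1, by rw [MulAction.mem_fixedBy, smul_vadd, (hfix p).1, (hfix p).2]⟩
  have hopposite (p) : ¬((first p).1.IsPlusType ↔ (second p).1.IsPlusType) := by
    rw [isPlusType_vadd_iff hB, mem_oppositeTypePairs.1 p.1.2]
    tauto
  gcongr
  refine Nat.card_le_card_of_injective (fun p ↦ ⟨(first p, second p), hopposite p⟩)
    fun p p' h ↦ ?_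
  have hQ : p.1.1.1 = p'.1.1.1 := congrArg (fun x ↦ x.1.1.1) h
  have hz : p.1.1.2 +ᵥ p.1.1.1 = p'.1.1.2 +ᵥ p'.1.1.1 := congrArg (fun x ↦ x.1.2.1) h
  rw [← hQ] at hz
  exact Subtype.ext (Subtype.ext (Prod.ext hQ (vadd_left_injective hB _ hz)))

open Classical in
lemma three_mul_natCard_fixedBy_oppositeTypePairs_add_le (hA : B.IsAlt) (hB : B.Nondegenerate)
    (hV : 2 < Module.finrank F V) (y : isometryGroup B) :
    3 * Nat.card (MulAction.fixedBy (oppositeTypePairs B) y) +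
        2 * (Nat.card F + 1) * Nat.card (MulAction.fixedBy V y) ≤
      2 * Nat.card (MulAction.fixedBy V y) ^ 2 + 2 * Nat.card F +
        2 * (Nat.card F ^ 2 + Nat.card F + 1) * if ∀ x, ¬InvGen x y then 1 else 0 := by
  set K := Nat.card (MulAction.fixedBy V y)
  set q := Nat.card F
  split_ifs with hy
  · have hP := two_mul_natCard_fixedBy_oppositeTypePairs_le hA hB y
    zify at hP ⊢
    linarith [sq_nonneg ((K : ℤ) - 2 * (q + 1))]
  · have hP : Nat.card (MulAction.fixedBy (oppositeTypePairs B) y) = 0 := by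
      refine Nat.card_eq_zero.2 (.inl ⟨fun p ↦ hy ?_⟩)
      obtain ⟨hQ, hz⟩ := smul_eq_of_mem_fixedBy_oppositeTypePairs p.2
      exact not_invGen hB hV p.1.2 hQ hz
    have hq : 1 ≤ q := Nat.card_pos
    obtain ⟨n, hn⟩ : ∃ n, K = q ^ n := exists_natCard_fixedBy_eq_pow F y
    have hK : 0 ≤ ((K : ℤ) - 1) * (K - q) := by
      rcases n.eq_zero_or_pos with rfl | hpos
      · simp [hn]
      · have hqK : q ≤ K := hn ▸ Nat.le_self_pow hpos.ne' q
        exact mul_nonneg (by lia) (by lia)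
    rw [hP]
    zify
    linarith

theorem card_mul_card_isometryGroup_le (hA : B.IsAlt) (hB : B.Nondegenerate)
    (hV : 2 < Module.finrank F V) :
    Nat.card F * Nat.card (isometryGroup B) ≤ 2 * (Nat.card F ^ 2 + Nat.card F + 1) *
      Nat.card {y : isometryGroup B // ∀ x, ¬InvGen x y} := by
  classical
  have := Fintype.ofFinite (isometryGroup B)
  have : Nontrivial V := Module.nontrivial_of_finrank_pos (by lia : 0 < Module.finrank F V)
  have hbad : Nat.card {y : isometryGroup B // ∀ x, ¬InvGen x y} =
      ∑ y : isometryGroup B, if ∀ x, ¬InvGen x y then 1 else 0 := by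
    rw [Finset.sum_boole, Nat.card_eq_fintype_card, Fintype.card_subtype, Nat.cast_id]
  have hK : 2 * Nat.card (isometryGroup B) ≤
      ∑ y : isometryGroup B, Nat.card (MulAction.fixedBy V y) := by
    rw [sum_natCard_fixedBy_eq]
    gcongr
    exact two_le_card_orbits _ V
  have hK2 : ∑ y : isometryGroup B, Nat.card (MulAction.fixedBy V y) ^ 2 ≤
      (2 * Nat.card F + 2) * Nat.card (isometryGroup B) := by
    simp_rw [sq, ← natCard_fixedBy_prod, sum_natCard_fixedBy_eq]
    gcongr
    exact card_orbits_prod_le hA hB hV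
  have hP : Nat.card F * Nat.card (isometryGroup B) ≤
      ∑ y : isometryGroup B, Nat.card (MulAction.fixedBy (oppositeTypePairs B) y) := by
    rw [sum_natCard_fixedBy_eq]
    gcongr
    exact card_le_card_orbits_oppositeTypePairs hA hB
  have hsum := Finset.sum_le_sum fun (y : isometryGroup B) (_ : y ∈ Finset.univ) ↦
    three_mul_natCard_fixedBy_oppositeTypePairs_add_le hA hB hV y
  simp only [Finset.sum_add_distrib, ← Finset.mul_sum, Finset.sum_const,
    Finset.card_univ, ← Nat.card_eq_fintype_card, smul_eq_mul] at hsum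
  rw [hbad]
  linarith [Nat.mul_le_mul_left (2 * (Nat.card F + 1)) hK]

end FixedPairs

/-! ### Symplectic matrices -/

section SymplecticMatrices

open Matrix

variable (l R : Type*) [Fintype l] [DecidableEq l] [CommRing R]

variable {l R} in
lemma mem_symplecticGroup_iff_comp_toLin' {A : Matrix (l ⊕ l) (l ⊕ l) R} :
    A ∈ symplecticGroup l R ↔
      (toBilin' (J l R)).comp (toLin' A) (toLin' A) = toBilin' (J l R) := by
  rw [toBilin'_comp, EmbeddingLike.apply_eq_iff_eq, SymplecticGroup.mem_iff']

/-- The group of symplectic matrices is the isometry group of the standard alternating form. -/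
noncomputable def symplecticGroupEquivIsometryGroup :
    symplecticGroup l R ≃* isometryGroup (toBilin' (J l R)) where
  toFun A :=
    ⟨toLin'OfInv (M := A⁻¹.1) (M' := A.1) (congrArg Subtype.val (inv_mul_cancel A))
      (congrArg Subtype.val (mul_inv_cancel A)),
      LinearMap.ext_iff₂.1 (mem_symplecticGroup_iff_comp_toLin'.1 A.2)⟩
  invFun g := ⟨LinearMap.toMatrix' g.1.toLinearMap, mem_symplecticGroup_iff_comp_toLin'.2 <| by
    rw [toLin'_toMatrix']
    exact LinearMap.ext₂ g.2⟩
  left_inv A := Subtype.ext (LinearMap.toMatrix'_toLin' A.1)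
  right_inv g := Subtype.ext (LinearEquiv.toLinearMap_injective (toLin'_toMatrix' _))
  map_mul' A A' := Subtype.ext (LinearEquiv.toLinearMap_injective (toLin'_mul A.1 A'.1))

lemma isAlt_toBilin'_J : (toBilin' (J l R)).IsAlt := fun u ↦ by
  rw [toBilin'_apply', J, fromBlocks_mulVec, dotProduct, Fintype.sum_sum_type]
  simp [neg_mulVec, mul_comm]

lemma nondegenerate_toBilin'_J (F : Type*) [Field F] : (toBilin' (J l F)).Nondegenerate :=
  LinearMap.BilinForm.nondegenerate_toBilin'_iff_det_ne_zero.2 (isUnit_det_J l F).ne_zero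

end SymplecticMatrices

/-! ### The proportion of elements belonging to no invariably generating pair -/

lemma one_div_four_mul_cube_le {q : ℝ} (hq : 2 ≤ q) :
    1 / (4 * q ^ 3) ≤ q / (2 * (q ^ 2 + q + 1)) := by
  rw [div_le_div_iff₀ (by positivity) (by positivity)]
  have hsq : 2 * q ≤ q ^ 2 := by nlinarith
  have hfourth : q ^ 2 ≤ q ^ 4 := by gcongr <;> linarith
  linarith

theorem stmt_14_general {l F : Type*} [Fintype l] [DecidableEq l] [Field F] [Fintype F]
    (hl : 2 ≤ Fintype.card l) (hF : Even (Fintype.card F)) :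
    (Nat.card {y : Matrix.symplecticGroup l F //
        ∀ x : Matrix.symplecticGroup l F, ¬ InvGen x y} : ℝ) ≥
      (Fintype.card F : ℝ) / (2 * ((Fintype.card F : ℝ) ^ 2 + Fintype.card F + 1)) *
        Nat.card (Matrix.symplecticGroup l F) ∧
    (Nat.card {y : Matrix.symplecticGroup l F //
        ∃ x : Matrix.symplecticGroup l F, InvGen x y} : ℝ) ≤
      (1 - (Fintype.card F : ℝ) / (2 * ((Fintype.card F : ℝ) ^ 2 + Fintype.card F + 1))) *
        Nat.card (Matrix.symplecticGroup l F) := by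
  have hchar : ringChar F = 2 := FiniteField.even_card_iff_char_two.2 (Nat.even_iff.1 hF)
  have : CharP F 2 := hchar ▸ ringChar.charP F
  have hV : 2 < Module.finrank F (l ⊕ l → F) := by
    rw [Module.finrank_fintype_fun_eq_card, Fintype.card_sum]
    lia
  let e := symplecticGroupEquivIsometryGroup l F
  have : Finite (Matrix.symplecticGroup l F) := Finite.of_equiv _ e.symm.toEquiv
  have hbad := card_mul_card_isometryGroup_le (isAlt_toBilin'_J l F)
    (nondegenerate_toBilin'_J l F) hV
  rw [← card_forall_not_invGen_congr e, ← Nat.card_congr e.toEquiv,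
    Nat.card_eq_fintype_card (α := F)] at hbad
  have hsplit := congrArg (Nat.cast (R := ℝ))
    (card_forall_not_invGen_add_card_exists_invGen (G := Matrix.symplecticGroup l F))
  rw [Nat.cast_add] at hsplit
  have hlower : (Fintype.card F : ℝ) / (2 * ((Fintype.card F : ℝ) ^ 2 + Fintype.card F + 1)) *
      Nat.card (Matrix.symplecticGroup l F) ≤ Nat.card {y : Matrix.symplecticGroup l F //
        ∀ x : Matrix.symplecticGroup l F, ¬ InvGen x y} := by
    rw [div_mul_eq_mul_div, div_le_iff₀' (by positivity)]
    exact_mod_cast hbad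
  exact ⟨hlower, by linarith⟩

theorem stmt_14 :
    ∃ M : ℕ, ∀ m : ℕ, M ≤ m →
      ∀ (F : Type) [Field F] [Fintype F], Even (Fintype.card F) →
        (Nat.card {y : Matrix.symplecticGroup (Fin m) F //
            ∀ x : Matrix.symplecticGroup (Fin m) F, ¬ InvGen x y} : ℝ) ≥
          (Nat.card (Matrix.symplecticGroup (Fin m) F) : ℝ) /
            (4 * (Fintype.card F : ℝ) ^ 3) ∧
        (Nat.card {y : Matrix.symplecticGroup (Fin m) F //
            ∃ x : Matrix.symplecticGroup (Fin m) F, InvGen x y} : ℝ) ≤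
          (1 - 1 / (4 * (Fintype.card F : ℝ) ^ 3)) *
            Nat.card (Matrix.symplecticGroup (Fin m) F) := by
  refine ⟨2, fun m hm F _ _ hF ↦ ?_⟩
  have hbound := one_div_four_mul_cube_le (Nat.ofNat_le_cast.2 (Fintype.one_lt_card (α := F)))
  obtain ⟨hbad, hgood⟩ := stmt_14_general (l := Fin m) (by simpa using hm) hF
  rw [← one_div_mul_eq_div]
  exact ⟨hbad.trans' (by gcongr), hgood.trans (by gcongr)⟩
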